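/- arXiv:0712.4399 — 2 statements merged into one kernel-verified Lean document; each statement's English description precedes it below -/
import Mathlib

section
/- Let f : ℤ → ℕ ∪ {∞} be any function for which f⁻¹(0) is a finite set, and let h ≥ 2 be an integer. Then there exists a subset A ⊆ ℤ such that for every n ∈ ℤ, the number of tuples (x₁,…,x_h) ∈ A^h with x₁ ≤ x₂ ≤ ⋯ ≤ x_h and x₁ + x₂ + ⋯ + x_h = n equals f(n). -/
/-!
The set `A` is the union of an increasing sequence of finite stages. A stage represents no integer
too often, and it is moreover a `B_{h-1}`-set: sums of `h - 1` of its elements determine the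
summands. To give an integer `n` one more representation, adjoin `-c` and `n + (h - 1) c` with `c`
huge; then `n` is the sum of `h - 1` copies of `-c` and one copy of `n + (h - 1) c`. In any other
sum of at most `h` elements involving a new one, the dominant term is a nonzero multiple of `c`.
This multiple tells how often each of the two new elements occurs, and the old summands are then
determined by the `B_{h-1}` property. So the other new sums are pairwise distinct, and they are so
large that `f` does not vanish at them.
-/

open Multiset Set

namespace Nathanson

section Representations

variable {α : Type*} [AddCommMonoid α] {A B : Set α} {h k : ℕ} {n : α}

/-- The representations of `n` as an unordered sum of `h` elements of `A`, with repetitions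
allowed. They are encoded as multisets instead of monotone tuples. -/
def sumRepresentations (A : Set α) (h : ℕ) (n : α) : Set (Multiset α) :=
  {s | s.card = h ∧ (∀ x ∈ s, x ∈ A) ∧ s.sum = n}

lemma sumRepresentations_mono (hAB : A ⊆ B) :
    sumRepresentations A h n ⊆ sumRepresentations B h n :=
  fun _ hs ↦ ⟨hs.1, fun x hx ↦ hAB (hs.2.1 x hx), hs.2.2⟩

lemma eq_zero_of_mem_sumRepresentations_empty {s : Multiset α}
    (hs : s ∈ sumRepresentations ∅ h n) : s = 0 :=
  eq_zero_of_forall_notMem hs.2.1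

lemma sumRepresentations_empty (hh : h ≠ 0) : sumRepresentations (∅ : Set α) h n = ∅ :=
  eq_empty_of_forall_notMem fun s hs ↦ hh <| by
    rw [← hs.1, eq_zero_of_mem_sumRepresentations_empty hs, card_zero]

lemma sumRepresentations_iUnion {ι : Type*} [Nonempty ι] {S : ι → Set α}
    (hS : Directed (· ⊆ ·) S) :
    sumRepresentations (⋃ i, S i) h n = ⋃ i, sumRepresentations (S i) h n := by
  classical
  refine Subset.antisymm (fun s hs ↦ ?_)
    (iUnion_subset fun i ↦ sumRepresentations_mono (subset_iUnion S i))
  obtain ⟨i, hi⟩ := hS.exists_mem_subset_of_finset_subset_biUnion (s := s.toFinset)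
    fun x hx ↦ hs.2.1 x (mem_toFinset.1 hx)
  exact mem_iUnion.2 ⟨i, hs.1, fun x hx ↦ hi (mem_toFinset.2 hx), hs.2.2⟩

/-- `A` is a `B_h`-set (a Sidon set of order `h`): a sum of `h` elements of `A` determines the
summands up to order. -/
def IsBSet (h : ℕ) (A : Set α) : Prop :=
  ∀ n, (sumRepresentations A h n).Subsingleton

lemma isBSet_empty : IsBSet h (∅ : Set α) := fun _ _ hs _ ht ↦ by
  rw [eq_zero_of_mem_sumRepresentations_empty hs, eq_zero_of_mem_sumRepresentations_empty ht]

lemma IsBSet.of_le {α : Type*} [AddCancelCommMonoid α] {A : Set α} (hA : IsBSet h A)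
    (hk : k ≤ h) : IsBSet k A := by
  intro n s hs t ht
  rcases s.empty_or_exists_mem with rfl | ⟨a, ha⟩
  · rw [eq_comm, ← card_eq_zero, ht.1, ← hs.1, card_zero]
  have pad : ∀ u ∈ sumRepresentations A k n,
      u + replicate (h - k) a ∈ sumRepresentations A h (n + (h - k) • a) := by
    rintro u ⟨hcard, hmem, rfl⟩
    refine ⟨by simp [hcard, hk], fun x hx ↦ ?_, by simp⟩
    rcases mem_add.1 hx with hx | hx
    · exact hmem x hx
    · exact eq_of_mem_replicate hx ▸ hs.2.1 a ha
  exact add_right_cancel (hA _ (pad s hs) (pad t ht))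

end Representations

section MonotoneTuples

variable {α : Type*} [LinearOrder α]

lemma bijOn_ofFn_monotone (h : ℕ) :
    BijOn (fun x : Fin h → α ↦ (List.ofFn x : Multiset α)) {x | Monotone x}
      {s | s.card = h} := by
  refine ⟨fun x _ ↦ by simp, fun x hx y hy hxy ↦ ?_, ?_⟩
  · exact List.ofFn_injective
      ((coe_eq_coe.1 hxy).eq_of_sortedLE (Monotone.sortedLE_ofFn hx) (Monotone.sortedLE_ofFn hy))
  · rintro s rfl
    have hlen : (s.sort (· ≤ ·)).length = s.card := by simp
    have hofFn : List.ofFn (fun i : Fin s.card ↦ (s.sort (· ≤ ·)).get (i.cast hlen.symm)) =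
        s.sort (· ≤ ·) := by
      apply List.ext_get <;> simp
    refine ⟨_, ?_, (congrArg _ hofFn).trans (sort_eq s (· ≤ ·))⟩
    rw [mem_ofPred_eq, ← List.sortedLE_ofFn_iff, hofFn]
    exact (s.pairwise_sort (· ≤ ·)).sortedLE

lemma encard_monotone_tuples [AddCommMonoid α] (A : Set α) (h : ℕ) (n : α) :
    {x : Fin h → α | (∀ i, x i ∈ A) ∧ Monotone x ∧ ∑ i, x i = n}.encard =
      (sumRepresentations A h n).encard := by
  have hbij := (bijOn_ofFn_monotone h).subset_right
    (r := sumRepresentations A h n) fun s hs ↦ hs.1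
  rw [← hbij.image_eq, hbij.injOn.encard_image]
  congr 1
  ext x
  simp [sumRepresentations, List.sum_ofFn, and_left_comm]

end MonotoneTuples

lemma encard_iUnion_of_directed {α ι : Type*} [Nonempty ι] {S : ι → Set α}
    (hS : Directed (· ⊆ ·) S) : (⋃ i, S i).encard = ⨆ i, (S i).encard := by
  refine le_antisymm (ENat.forall_natCast_le_iff_le.1 fun k hk ↦ ?_)
    (iSup_le fun i ↦ encard_le_encard (subset_iUnion S i))
  obtain ⟨T, hT, hcard⟩ := exists_subset_encard_eq hk
  lift T to Finset α using finite_of_encard_eq_coe hcard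
  obtain ⟨i, hi⟩ := hS.exists_mem_subset_of_finset_subset_biUnion hT
  exact hcard ▸ (encard_le_encard hi).trans (le_iSup (fun i ↦ (S i).encard) i)

lemma exists_eq_replicate_add {α : Type*} {A : Set α} {a : α} {s : Multiset α}
    (hs : ∀ x ∈ s, x ∈ insert a A) :
    ∃ i t, s = replicate i a + t ∧ ∀ x ∈ t, x ∈ A := by
  classical
  refine ⟨s.count a, s.filter (· ≠ a), ?_, fun x hx ↦ ?_⟩
  · rw [← filter_eq', filter_add_not]
  · exact (hs x (mem_of_mem_filter hx)).resolve_left (mem_filter.1 hx).2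

lemma exists_forall_abs_le {α : Type*} [AddGroup α] [LinearOrder α] {A : Set α}
    (hA : A.Finite) : ∃ M, ∀ a ∈ A, |a| ≤ M := by
  obtain ⟨M, hM⟩ := (hA.image abs).bddAbove
  exact ⟨M, fun a ha ↦ hM (mem_image_of_mem abs ha)⟩

lemma abs_sum_le_card_nsmul {α : Type*} [AddCommGroup α] [LinearOrder α] [IsOrderedAddMonoid α]
    {s : Multiset α} {M : α} (hs : ∀ x ∈ s, |x| ≤ M) : |s.sum| ≤ s.card • M := by
  calc |s.sum| ≤ (s.map abs).sum := abs_sum_le_sum_abs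
    _ ≤ (s.map abs).card • M := sum_le_card_nsmul _ _ (by simpa using hs)
    _ = s.card • M := by rw [card_map]

lemma eq_and_eq_of_mul_add_eq_mul_add {c q q' r r' R : ℤ} (hc : 2 * R < c) (hr : |r| ≤ R)
    (hr' : |r'| ≤ R) (h : c * q + r = c * q' + r') : q = q' ∧ r = r' := by
  have hlt : |r - r'| < c := (abs_sub r r').trans_lt (by linarith)
  have hdvd : c ∣ r - r' := ⟨q' - q, by linarith⟩
  have hrr : r = r' := sub_eq_zero.1 (Int.eq_zero_of_abs_lt_dvd hdvd hlt)
  have hc0 : c ≠ 0 := ((abs_nonneg _).trans_lt hlt).ne'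
  exact ⟨mul_left_cancel₀ hc0 (by linarith), hrr⟩

-- The hypothesis determines `i + j` modulo `g + 1`, since `g * j - i ≡ -(i + j)`.
lemma eq_or_eq_zero_of_mul_sub_eq {g i j i' j' : ℕ} (hij : i + j ≤ g + 1)
    (hij' : i' + j' ≤ g + 1) (h : (g * j - i : ℤ) = g * j' - i') :
    (i = i' ∧ j = j') ∨ ((g * j - i : ℤ) = 0 ∧ (i + j = g + 1 ∨ i' + j' = g + 1)) := by
  wlog hjj : j ≤ j' generalizing i j i' j'
  · rcases this hij' hij h.symm (le_of_not_ge hjj) with ⟨hi, hj⟩ | ⟨h0, hor⟩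
    · exact .inl ⟨hi.symm, hj.symm⟩
    · exact .inr ⟨h.trans h0, hor.symm⟩
  rcases hjj.eq_or_lt with rfl | hlt
  · exact .inl ⟨by omega, rfl⟩
  · have hsum : (i' + j' : ℤ) = i + j + (g + 1) * (j' - j) := by linarith
    have hstep : (g + 1 : ℤ) ≤ (g + 1) * (j' - j) :=
      le_mul_of_one_le_right (by positivity) (by omega)
    obtain ⟨rfl, rfl⟩ : i = 0 ∧ j = 0 := by omega
    exact .inr ⟨by simp, .inr (by omega)⟩

lemma eq_zero_or_eq_of_mul_sub_eq_zero {g i j : ℕ} (hij : i + j ≤ g + 1)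
    (h : (g * j - i : ℤ) = 0) : (i = 0 ∧ j = 0) ∨ (i = g ∧ j = 1) := by
  obtain rfl : i = g * j := by zify; linarith
  have hj : j ≤ 1 := by
    refine Nat.le_of_mul_le_mul_left (c := g + 1) ?_ g.succ_pos
    rwa [add_one_mul, mul_one]
  interval_cases j <;> simp

section AdjoinPair

/-- The set `A` together with the two elements `-c` and `n + g * c`, chosen so that `n` becomes the
sum of `g` copies of the first and one copy of the second. -/
def adjoinPair (g : ℕ) (n c : ℤ) (A : Set ℤ) : Set ℤ :=
  insert (-c) (insert (n + g * c) A)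

/-- The multiset `s` enlarged by `i` copies of `-c` and `j` copies of `n + g * c`, the two new
elements of `adjoinPair g n c A`. -/
def addCopies (g : ℕ) (n c : ℤ) (i j : ℕ) (s : Multiset ℤ) : Multiset ℤ :=
  replicate i (-c) + (replicate j (n + g * c) + s)

variable {g i j k : ℕ} {n c m M : ℤ} {A : Set ℤ} {s t : Multiset ℤ}

lemma subset_adjoinPair : A ⊆ adjoinPair g n c A :=
  fun _ hx ↦ .inr (.inr hx)

lemma finite_adjoinPair (hA : A.Finite) : (adjoinPair g n c A).Finite :=
  (hA.insert _).insert _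

lemma exists_eq_addCopies (hs : ∀ x ∈ s, x ∈ adjoinPair g n c A) :
    ∃ i j t, s = addCopies g n c i j t ∧ ∀ x ∈ t, x ∈ A := by
  obtain ⟨i, u, rfl, hu⟩ := exists_eq_replicate_add hs
  obtain ⟨j, t, rfl, ht⟩ := exists_eq_replicate_add hu
  exact ⟨i, j, t, rfl, ht⟩

lemma card_addCopies : (addCopies g n c i j s).card = i + j + s.card := by
  simp [addCopies, add_assoc]

lemma sum_addCopies :
    (addCopies g n c i j s).sum = c * (g * j - i) + (replicate j n + s).sum := by
  simp only [addCopies, sum_add, sum_replicate, nsmul_eq_mul]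
  ring

lemma addCopies_mem_sumRepresentations :
    addCopies g n c g 1 0 ∈ sumRepresentations (adjoinPair g n c A) (g + 1) n := by
  refine ⟨by simp [card_addCopies], fun x hx ↦ ?_, by simp [sum_addCopies]⟩
  simp only [addCopies, mem_add, replicate_one, Multiset.mem_singleton, notMem_zero, or_false] at hx
  rcases hx with hx | rfl
  · exact .inl (eq_of_mem_replicate hx)
  · exact .inr (.inl rfl)

variable (hM : ∀ a ∈ insert n A, |a| ≤ M)
include hM

lemma abs_sum_replicate_add_le (hs : ∀ x ∈ s, x ∈ A)
    (hcard : i + j + s.card ≤ g + 1) : |(replicate j n + s).sum| ≤ (g + 1) * M := by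
  have hbound : ∀ x ∈ replicate j n + s, |x| ≤ M := fun x hx ↦ hM x <|
    (mem_add.1 hx).imp eq_of_mem_replicate (hs x)
  have hM0 : 0 ≤ M := (abs_nonneg n).trans (hM n (mem_insert n A))
  have hcard' : (replicate j n + s).card ≤ g + 1 := by
    rw [card_add, card_replicate]
    omega
  calc |(replicate j n + s).sum| ≤ (replicate j n + s).card • M := abs_sum_le_card_nsmul hbound
    _ ≤ (g + 1) • M := nsmul_le_nsmul_left hM0 hcard'
    _ = (g + 1) * M := by simp

variable (hc : 2 * ((g + 1) * M) < c)
include hc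

lemma neg_notMem_of_abs_le : -c ∉ A := fun hmem ↦ by
  have hcM := hM _ (mem_insert_of_mem n hmem)
  rw [abs_neg] at hcM
  have hM0 : 0 ≤ M := (abs_nonneg c).trans hcM
  nlinarith [le_abs_self c]

lemma eq_or_abs_le_of_mem_sumRepresentations_adjoinPair (hA : IsBSet g A) (hk : k ≤ g + 1)
    (hs : s ∈ sumRepresentations (adjoinPair g n c A) k m)
    (ht : t ∈ sumRepresentations (adjoinPair g n c A) k m) :
    s = t ∨ (k = g + 1 ∧ |m| ≤ (g + 1) * M) := by
  obtain ⟨hcard, hs, hsum⟩ := hs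
  obtain ⟨hcard', ht, hsum'⟩ := ht
  obtain ⟨i, j, s, rfl, hsA⟩ := exists_eq_addCopies hs
  obtain ⟨i', j', t, rfl, htA⟩ := exists_eq_addCopies ht
  rw [card_addCopies] at hcard hcard'
  rw [sum_addCopies] at hsum hsum'
  have hr := abs_sum_replicate_add_le hM hsA (hcard.trans_le hk)
  have hr' := abs_sum_replicate_add_le hM htA (hcard'.trans_le hk)
  have small (h0 : (g * j - i : ℤ) = 0) : |m| ≤ (g + 1) * M := by
    rwa [← hsum, h0, mul_zero, zero_add]
  obtain ⟨hq, hrr⟩ := eq_and_eq_of_mul_add_eq_mul_add hc hr hr' (hsum.trans hsum'.symm)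
  rcases eq_or_eq_zero_of_mul_sub_eq (by omega) (by omega) hq with ⟨rfl, rfl⟩ | ⟨h0, hor⟩
  · rw [sum_add, sum_add, add_right_inj] at hrr
    by_cases hsg : s.card ≤ g
    · left
      rw [hA.of_le hsg _ ⟨rfl, hsA, rfl⟩ ⟨by omega, htA, hrr.symm⟩]
    · obtain ⟨rfl, rfl⟩ : i = 0 ∧ j = 0 := by omega
      exact .inr ⟨by omega, small (by simp)⟩
  · exact .inr ⟨by omega, small h0⟩

lemma isBSet_adjoinPair (hA : IsBSet g A) : IsBSet g (adjoinPair g n c A) :=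
  fun _ _ hs _ ht ↦
    (eq_or_abs_le_of_mem_sumRepresentations_adjoinPair hM hc hA g.le_succ hs ht).resolve_right
      fun h ↦ g.lt_succ_self.ne h.1

lemma subsingleton_sumRepresentations_adjoinPair (hA : IsBSet g A) (hm : (g + 1) * M < |m|) :
    (sumRepresentations (adjoinPair g n c A) (g + 1) m).Subsingleton :=
  fun _ hs _ ht ↦
    (eq_or_abs_le_of_mem_sumRepresentations_adjoinPair hM hc hA le_rfl hs ht).resolve_right
      fun h ↦ h.2.not_gt hm

lemma mem_or_eq_of_mem_sumRepresentations_adjoinPair (hm : |m| ≤ (g + 1) * M)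
    (hs : s ∈ sumRepresentations (adjoinPair g n c A) (g + 1) m) :
    s ∈ sumRepresentations A (g + 1) m ∨ (m = n ∧ s = addCopies g n c g 1 0) := by
  obtain ⟨hcard, hs, hsum⟩ := hs
  obtain ⟨i, j, s, rfl, hsA⟩ := exists_eq_addCopies hs
  have hcard' := hcard
  have hsum' := hsum
  rw [card_addCopies] at hcard'
  rw [sum_addCopies] at hsum'
  have hr := abs_sum_replicate_add_le hM hsA hcard'.le
  have hq := (eq_and_eq_of_mul_add_eq_mul_add (q' := 0) hc hr hm (by simpa using hsum')).1
  rcases eq_zero_or_eq_of_mul_sub_eq_zero (by omega) hq with ⟨rfl, rfl⟩ | ⟨rfl, rfl⟩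
  · simp only [addCopies, replicate_zero, zero_add] at hcard hsum ⊢
    exact .inl ⟨hcard, hsA, hsum⟩
  · obtain rfl : s = 0 := card_eq_zero.1 (by omega)
    exact .inr ⟨by simpa using hsum'.symm, rfl⟩

end AdjoinPair

section Stages

/-- A finite stage of the construction of a set with `f` as its representation function of order
`g + 1`. Being a `B_g`-set is what allows a stage to be enlarged. -/
structure IsStage (f : ℤ → ℕ∞) (g : ℕ) (A : Set ℤ) : Prop where
  finite : A.Finite
  isBSet : IsBSet g A
  encard_le (n : ℤ) : (sumRepresentations A (g + 1) n).encard ≤ f n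

variable {f : ℤ → ℕ∞} {g : ℕ} {A : Set ℤ} {n : ℤ}

lemma isStage_empty : IsStage f g ∅ where
  finite := finite_empty
  isBSet := isBSet_empty
  encard_le n := by simp [sumRepresentations_empty]

lemma isStage_adjoinPair {M c : ℤ} (hA : IsStage f g A)
    (hM : ∀ a ∈ insert n A, |a| ≤ M) (hc : 2 * ((g + 1) * M) < c)
    (hfM : ∀ m, f m = 0 → |m| ≤ M) (hlt : (sumRepresentations A (g + 1) n).encard < f n) :
    IsStage f g (adjoinPair g n c A) where
  finite := finite_adjoinPair hA.finite
  isBSet := isBSet_adjoinPair hM hc hA.isBSet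
  encard_le m := by
    rcases le_or_gt |m| ((g + 1) * M) with hm | hm
    · have hmem := fun s ↦ mem_or_eq_of_mem_sumRepresentations_adjoinPair (s := s) hM hc hm
      by_cases hmn : m = n
      · subst hmn
        have hsub : sumRepresentations (adjoinPair g m c A) (g + 1) m ⊆
            insert (addCopies g m c g 1 0) (sumRepresentations A (g + 1) m) :=
          fun s hs ↦ (hmem s hs).symm.imp_left And.right
        exact (encard_le_encard hsub).trans <| (encard_insert_le _ _).trans <|
          Order.add_one_le_of_lt hlt
      · have hsub : sumRepresentations (adjoinPair g n c A) (g + 1) m ⊆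
            sumRepresentations A (g + 1) m :=
          fun s hs ↦ (hmem s hs).resolve_right fun h ↦ hmn h.1
        exact (encard_le_encard hsub).trans (hA.encard_le m)
    · have hfm : f m ≠ 0 := fun h0 ↦ by
        have hmM := hfM m h0
        nlinarith [(abs_nonneg m).trans hmM]
      exact (encard_le_one_iff_subsingleton.2
        (subsingleton_sumRepresentations_adjoinPair hM hc hA.isBSet hm)).trans
        (Order.one_le_iff_ne_zero.2 hfm)

lemma IsStage.exists_add_one_le (hf : {n : ℤ | f n = 0}.Finite) (hg : g ≠ 0)
    (hA : IsStage f g A) (hlt : (sumRepresentations A (g + 1) n).encard < f n) :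
    ∃ B, A ⊆ B ∧ IsStage f g B ∧ (sumRepresentations A (g + 1) n).encard + 1 ≤
      (sumRepresentations B (g + 1) n).encard := by
  obtain ⟨M, hM⟩ := exists_forall_abs_le ((hA.finite.insert n).union hf)
  obtain ⟨c, hc⟩ := exists_gt (2 * ((g + 1) * M))
  have hMA : ∀ a ∈ insert n A, |a| ≤ M := fun a ha ↦ hM a (.inl ha)
  refine ⟨adjoinPair g n c A, subset_adjoinPair,
    isStage_adjoinPair hA hMA hc (fun m hm ↦ hM m (.inr hm)) hlt, ?_⟩
  have hnew : addCopies g n c g 1 0 ∉ sumRepresentations A (g + 1) n := fun hmem ↦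
    neg_notMem_of_abs_le hMA hc (hmem.2.1 _ (by simp [addCopies, mem_replicate, hg]))
  rw [← encard_insert_of_notMem hnew]
  exact encard_le_encard <| insert_subset addCopies_mem_sumRepresentations <|
    sumRepresentations_mono subset_adjoinPair

lemma IsStage.exists_natCast_le (hf : {n : ℤ | f n = 0}.Finite) (hg : g ≠ 0)
    (hA : IsStage f g A) {k : ℕ} (hk : k ≤ f n) :
    ∃ B, A ⊆ B ∧ IsStage f g B ∧ k ≤ (sumRepresentations B (g + 1) n).encard := by
  induction k with
  | zero => exact ⟨A, subset_rfl, hA, by simp⟩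
  | succ k ih =>
    obtain ⟨B, hAB, hB, hkB⟩ := ih ((Nat.cast_le.2 k.le_succ).trans hk)
    rcases (hB.encard_le n).lt_or_eq with hlt | heq
    · obtain ⟨C, hBC, hC, hkC⟩ := hB.exists_add_one_le hf hg hlt
      refine ⟨C, hAB.trans hBC, hC, le_trans ?_ hkC⟩
      push_cast
      gcongr
    · exact ⟨B, hAB, hB, hk.trans_eq heq.symm⟩

lemma exists_monotone_isStage (hf : {n : ℤ | f n = 0}.Finite) (hg : g ≠ 0) :
    ∃ S : ℕ → Set ℤ, Monotone S ∧ (∀ i, IsStage f g (S i)) ∧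
      ∀ (n : ℤ) (k : ℕ), k ≤ f n → ∃ i, k ≤ (sumRepresentations (S i) (g + 1) n).encard := by
  let 𝒟 (p : ℤ × ℕ) : Order.Cofinal {A // IsStage f g A} :=
    { carrier := {A | p.2 ≤ f p.1 → p.2 ≤ (sumRepresentations A.1 (g + 1) p.1).encard}
      isCofinal := fun A ↦ by
        by_cases hp : p.2 ≤ f p.1
        · obtain ⟨B, hAB, hB, hpB⟩ := A.2.exists_natCast_le hf hg hp
          exact ⟨⟨B, hB⟩, fun _ ↦ hpB, hAB⟩
        · exact ⟨A, fun h ↦ absurd h hp, le_rfl⟩ }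
  let S := Order.sequenceOfCofinals ⟨∅, isStage_empty⟩ 𝒟
  exact ⟨fun i ↦ (S i).1, Order.sequenceOfCofinals.monotone _ 𝒟, fun i ↦ (S i).2,
    fun n k hk ↦ ⟨_, Order.sequenceOfCofinals.encode_mem _ 𝒟 (n, k) hk⟩⟩

lemma exists_encard_sumRepresentations_eq (hf : {n : ℤ | f n = 0}.Finite) (hg : g ≠ 0) :
    ∃ A : Set ℤ, ∀ n, (sumRepresentations A (g + 1) n).encard = f n := by
  obtain ⟨S, hS, hstage, hreach⟩ := exists_monotone_isStage hf hg
  refine ⟨⋃ i, S i, fun n ↦ ?_⟩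
  have hmono : Monotone fun i ↦ sumRepresentations (S i) (g + 1) n :=
    fun _ _ hij ↦ sumRepresentations_mono (hS hij)
  rw [sumRepresentations_iUnion hS.directed_le, encard_iUnion_of_directed hmono.directed_le]
  refine le_antisymm (iSup_le fun i ↦ (hstage i).encard_le n)
    (ENat.forall_natCast_le_iff_le.1 fun k hk ↦ ?_)
  obtain ⟨i, hi⟩ := hreach n k hk
  exact le_iSup_of_le i hi

end Stages

end Nathanson

theorem nathanson_unordered_representation
    (f : ℤ → ℕ∞) (hf : {n : ℤ | f n = 0}.Finite) (h : ℕ) (hh : 2 ≤ h) :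
    ∃ A : Set ℤ, ∀ n : ℤ,
      Set.encard {x : Fin h → ℤ | (∀ i, x i ∈ A) ∧ Monotone x ∧ (∑ i, x i) = n} = f n := by
  obtain ⟨g, rfl⟩ := Nat.exists_eq_add_of_le' (Nat.one_le_of_lt hh)
  obtain ⟨A, hA⟩ := Nathanson.exists_encard_sumRepresentations_eq hf (g := g) (by omega)
  exact ⟨A, fun n ↦ (Nathanson.encard_monotone_tuples A (g + 1) n).trans (hA n)⟩
end

section
/- Let 𝓛₀ denote the linear form x₁ − x₂. Let A ⊆ ℤ and suppose that for some n ∈ ℤ with n ≠ 0 we have f_{A,𝓛₀}(n) ≥ 3. Then there exists m ∈ ℤ with m ∉ {0, n, −n} such that f_{A,𝓛₀}(m) ≥ 2. -/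
/-- The representation function of `A ⊆ ℤ` for the form `𝓛₀ : x₁ - x₂`: the
number (in `ℕ∞`) of equivalence classes of representations of `n`, where
representations `(x₁, x₂)` and `(y₁, y₂)` of `n` are equivalent iff for every
`ξ ∈ ℤ`, `∑_{i : x_i = ξ} a_i = ∑_{i : y_i = ξ} a_i` with `(a₁, a₂) = (1, -1)`.
Equivalence classes are identified with the functions `g : ℤ → ℤ`,
`g ξ = [x₁ = ξ] - [x₂ = ξ]`. -/
noncomputable def diffRep (A : Set ℤ) (n : ℤ) : ℕ∞ :=
  Set.encard { g : ℤ → ℤ | ∃ x y : ℤ, x ∈ A ∧ y ∈ A ∧ x - y = n ∧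
    ∀ ξ : ℤ, g ξ = (if x = ξ then (1 : ℤ) else 0) + (if y = ξ then (-1 : ℤ) else 0) }

/-!
Two representations `(x + n) - x` and `(y + n) - y` of `n` span a parallelogram, whose other pair
of parallel sides gives two representations of `x - y`. Among three representations, some `x - y`
avoids `0`, `n` and `-n`: the differences along the triangle formed by the three points `x` add up
to zero, while a sum of three terms `±n` is `±n` or `±3n`.
-/

section AddCommGroup

variable {G : Type*} [AddCommGroup G] {A S : Set G} {n x y : G}

/-- The representations of `n` as a difference of two elements of `A`, each encoded by its
subtrahend: `x` stands for `n = (x + n) - x`. -/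
def differenceReps (A : Set G) (n : G) : Set G :=
  {x | x ∈ A ∧ x + n ∈ A}

theorem two_le_encard_differenceReps_sub (hn : n ≠ 0) (hx : x ∈ differenceReps A n)
    (hy : y ∈ differenceReps A n) : 2 ≤ (differenceReps A (x - y)).encard := by
  have hy_rep : y ∈ differenceReps A (x - y) := ⟨hy.1, by simpa using hx.1⟩
  have hyn_rep : y + n ∈ differenceReps A (x - y) :=
    ⟨hy.2, by simpa [add_right_comm y n (x - y)] using hx.2⟩
  have hne : y ≠ y + n := by simpa using hn
  calc 2 = ({y, y + n} : Set G).encard := (Set.encard_pair hne).symm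
    _ ≤ (differenceReps A (x - y)).encard :=
      Set.encard_le_encard (Set.pair_subset hy_rep hyn_rep)

theorem exists_sub_notMem_of_three_le_encard (hn : 3 • n ≠ 0) (hS : 3 ≤ S.encard) :
    ∃ x ∈ S, ∃ y ∈ S, x - y ∉ ({0, n, -n} : Set G) := by
  obtain ⟨T, hTS, hT⟩ := Set.exists_subset_encard_eq hS
  obtain ⟨a, b, c, hab, hac, hbc, rfl⟩ := Set.encard_eq_three.1 hT
  by_contra! h
  have eq_or_eq_neg {x y : G} (hx : x ∈ S) (hy : y ∈ S) (hxy : x ≠ y) :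
      x - y = n ∨ x - y = -n :=
    (h x hx y hy).resolve_left (sub_ne_zero.2 hxy)
  have ha : a ∈ S := hTS (by simp)
  have hb : b ∈ S := hTS (by simp)
  have hc : c ∈ S := hTS (by simp)
  have triangle : (a - b) + (b - c) + (c - a) = 0 := by abel
  have hn₀ : n ≠ 0 := by
    rintro rfl
    exact hn (smul_zero 3)
  rcases eq_or_eq_neg ha hb hab with h₁ | h₁ <;> rcases eq_or_eq_neg hb hc hbc with h₂ | h₂ <;>
    rcases eq_or_eq_neg hc ha hac.symm with h₃ | h₃ <;> rw [h₁, h₂, h₃] at triangle <;> grind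

theorem three_representations_force_another_general (hn : 3 • n ≠ 0)
    (h3 : 3 ≤ (differenceReps A n).encard) :
    ∃ m : G, m ∉ ({0, n, -n} : Set G) ∧ 2 ≤ (differenceReps A m).encard := by
  obtain ⟨x, hx, y, hy, hxy⟩ := exists_sub_notMem_of_three_le_encard hn h3
  have hn₀ : n ≠ 0 := right_ne_zero_of_smul hn
  exact ⟨x - y, hxy, two_le_encard_differenceReps_sub hn₀ hx hy⟩

end AddCommGroup

/-- The equivalence class of the representation `(x + n) - x` of `n`, encoded by its coefficient
function, as in `diffRep`. -/
def repClass (n x : ℤ) : ℤ → ℤ :=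
  fun ξ => (if x + n = ξ then 1 else 0) + (if x = ξ then -1 else 0)

theorem repClass_injective {n : ℤ} (hn : n ≠ 0) : Function.Injective (repClass n) := by
  intro x y hxy
  by_contra hne
  have hx : repClass n x x = -1 := by simp [repClass, hn]
  have hy : 0 ≤ repClass n y x := by
    simp only [repClass, if_neg (Ne.symm hne), add_zero]
    positivity
  have := congrFun hxy x
  omega

theorem diffRep_eq_encard_differenceReps (A : Set ℤ) {n : ℤ} (hn : n ≠ 0) :
    diffRep A n = (differenceReps A n).encard := by
  rw [← (repClass_injective hn).encard_image, diffRep]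
  congr 1
  ext g
  constructor
  · rintro ⟨x, y, hx, hy, rfl, hg⟩
    exact ⟨y, ⟨hy, by simpa using hx⟩, funext fun ξ => by simp [repClass, hg]⟩
  · rintro ⟨y, ⟨hy, hx⟩, rfl⟩
    exact ⟨y + n, y, hx, hy, add_sub_cancel_left y n, fun _ => rfl⟩

theorem three_representations_force_another
    (A : Set ℤ) (n : ℤ) (hn : n ≠ 0) (h3 : 3 ≤ diffRep A n) :
    ∃ m : ℤ, m ∉ ({0, n, -n} : Set ℤ) ∧ 2 ≤ diffRep A m := by
  rw [diffRep_eq_encard_differenceReps A hn] at h3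
  obtain ⟨m, hm, h2⟩ := three_representations_force_another_general (by simpa using hn) h3
  have hm₀ : m ≠ 0 := fun h => hm (Or.inl h)
  exact ⟨m, hm, (diffRep_eq_encard_differenceReps A hm₀).symm ▸ h2⟩
end
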